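/- Let M ∈ SL₂(ℤ) with M ∉ {±I, ±S, ±T, ±ST}, where I is the identity matrix, S = (0,−1;1,0) and T = (1,1;0,1). Then sgn(M·T^{−1}) = sgn(M). -/

import Mathlib

open Complex MeasureTheory
open scoped Real

noncomputable section

namespace LHMF

abbrev SL2Z := Matrix.SpecialLinearGroup (Fin 2) ℤ

/-- Möbius action of `SL₂(ℤ)` on `ℂ`. -/
def moeb (M : SL2Z) (τ : ℂ) : ℂ :=
  ((M.1 0 0 : ℂ) * τ + (M.1 0 1 : ℂ)) / ((M.1 1 0 : ℂ) * τ + (M.1 1 1 : ℂ))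

/-- Automorphy factor `j(M,τ) = cτ + d`. -/
def jfac (M : SL2Z) (τ : ℂ) : ℂ := (M.1 1 0 : ℂ) * τ + (M.1 1 1 : ℂ)

/-- `E₁`: union of all `SL₂(ℤ)`-translates of the positive imaginary axis. -/
def E1 : Set ℂ := ⋃ M : SL2Z, (fun y : ℝ => moeb M ((y : ℂ) * Complex.I)) '' Set.Ioi 0

/-- Wirtinger derivative `∂f/∂τ`. -/
def dtau (f : ℂ → ℂ) (τ : ℂ) : ℂ :=
  (fderiv ℝ f τ 1 - Complex.I * fderiv ℝ f τ Complex.I) / 2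

/-- Wirtinger derivative `∂f/∂τ̄`. -/
def dtaubar (f : ℂ → ℂ) (τ : ℂ) : ℂ :=
  (fderiv ℝ f τ 1 + Complex.I * fderiv ℝ f τ Complex.I) / 2

/-- The operator `ξ_κ f = 2i v^κ conj(∂f/∂τ̄)`. -/
def xiOp (κ : ℤ) (f : ℂ → ℂ) (τ : ℂ) : ℂ :=
  2 * Complex.I * ((τ.im : ℂ) ^ κ) * starRingEnd ℂ (dtaubar f τ)

/-- The operator `𝒟 = (1/(2πi)) ∂/∂τ`. -/
def Dop (f : ℂ → ℂ) : ℂ → ℂ := fun τ => (2 * (π : ℂ) * Complex.I)⁻¹ * dtau f τ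

/-- Maass raising operator of weight `κ`. -/
def raiseOp (κ : ℤ) (f : ℂ → ℂ) (τ : ℂ) : ℂ :=
  2 * Complex.I * dtau f τ + (κ : ℂ) * (τ.im : ℂ)⁻¹ * f τ

/-- Iterated raising operator `R_κ^m = R_{κ+2m-2} ∘ ⋯ ∘ R_{κ+2} ∘ R_κ`. -/
def raiseIter (κ : ℤ) : ℕ → (ℂ → ℂ) → (ℂ → ℂ)
  | 0 => fun f => f
  | m + 1 => fun f => raiseOp (κ + 2 * m) (raiseIter κ m f)

/-- Petersson's Poincaré series `H_{k,k-1}(z,τ)`. -/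
def Hpet (k : ℕ) (z τ : ℂ) : ℂ :=
  ∑' M : SL2Z, jfac M τ ^ (2 * k - 2) * ((moeb M τ).im : ℂ) ^ (2 * k - 1) *
    (z - moeb M τ)⁻¹ * (z - starRingEnd ℂ (moeb M τ)) ^ (1 - 2 * (k : ℤ))

/-- The locally harmonic Maass form `H_{1-k,n}`. -/
def Hlhmf (k n : ℕ) (τ : ℂ) : ℂ :=
  (2 * Complex.I) ^ (2 * k - 2) / (2 * (π : ℂ)) *
    ∫ y in Set.Ioi (0 : ℝ), Hpet k ((y : ℂ) * Complex.I) τ * (y : ℂ) ^ n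

/-- The cusp form `R_n` of weight `2k`. -/
def Rnform (k n : ℕ) (τ : ℂ) : ℂ :=
  (2 : ℂ) ^ (2 * k - 3) / (Complex.I ^ (2 * k - 1 - n) * (Nat.choose (2 * k - 2) n : ℂ) * (π : ℂ)) *
    ∑' M : SL2Z, jfac M τ ^ (-2 * (k : ℤ)) * moeb M τ ^ (-(n : ℤ) - 1)

/-- Holomorphic Eichler integral of `f` (weight `2k`), along a vertical path. -/
def eichlerHol (k : ℕ) (f : ℂ → ℂ) (τ : ℂ) : ℂ :=
  (-2 * (π : ℂ) * Complex.I) ^ (2 * k - 1) / (Nat.factorial (2 * k - 2) : ℂ) *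
    ∫ t in Set.Ioi (0 : ℝ), f (τ + (t : ℂ) * Complex.I) * ((t : ℂ) * Complex.I) ^ (2 * k - 2) *
      Complex.I

/-- Non-holomorphic Eichler integral `f^*` of `f` (weight `2k`), along a vertical path. -/
def eichlerStar (k : ℕ) (f : ℂ → ℂ) (τ : ℂ) : ℂ :=
  (-2 * Complex.I) ^ (1 - 2 * (k : ℤ)) *
    ∫ t in Set.Ioi (0 : ℝ),
      starRingEnd ℂ (f (-(starRingEnd ℂ (-(starRingEnd ℂ τ) + (t : ℂ) * Complex.I)))) *
        (-(starRingEnd ℂ τ) + (t : ℂ) * Complex.I + τ) ^ (2 * k - 2) * Complex.I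

/-- Bernoulli polynomial evaluated at a complex number. -/
def bernC (m : ℕ) (τ : ℂ) : ℂ := Polynomial.aeval τ (Polynomial.bernoulli m)

/-- Periodized Bernoulli polynomial `𝔹_m(τ) = B_m(τ - ⌊Re τ⌋)`. -/
def bernPer (m : ℕ) (τ : ℂ) : ℂ := bernC m (τ - (⌊τ.re⌋ : ℂ))

/-- The period `r_n(E_{2k})` of the Eisenstein series, for `0 < n < 2k-2`. -/
def rnE (k n : ℕ) : ℚ :=
  if n % 2 = 0 then 0
  else (-1) ^ ((n - 1) / 2) * (2 * (k : ℚ)) * bernoulli (n + 1) * bernoulli (2 * k - 1 - n) /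
    (bernoulli (2 * k) * ((n : ℚ) + 1) * ((2 * k - 1 - n : ℕ) : ℚ))

/-- The local polynomial `P_{1-k,n}`. -/
def Ppoly (k n : ℕ) (τ : ℂ) : ℂ :=
  (rnE k n : ℂ)
  + (-Complex.I) ^ (n + 1) / ((n : ℂ) + 1) * bernPer (n + 1) τ
  + Complex.I ^ (n + 1) / ((2 * k - 1 - n : ℕ) : ℂ) * bernPer (2 * k - 1 - n) τ
  + Complex.I ^ (1 - (n : ℤ)) / 2 *
      ∑' M : {M : SL2Z // 0 < M.1 0 0 * M.1 1 0 ∧ (moeb M τ).re < 0},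
        jfac M.1 τ ^ (2 * k - 2) *
          (moeb M.1 τ ^ n - (-1 : ℂ) ^ n * moeb M.1 τ ^ (2 * k - 2 - n))

/-- The binary quadratic form `[a,b,c]` evaluated at complex arguments. -/
def qfC (a b c : ℤ) (x y : ℂ) : ℂ := (a : ℂ) * x ^ 2 + (b : ℂ) * x * y + (c : ℂ) * y ^ 2

/-- CM point of the positive definite form `[a,b,c]`. -/
def cmPoint (a b c : ℤ) : ℂ :=
  (-(b : ℂ) + Complex.I * ((Real.sqrt (((b ^ 2 - 4 * a * c).natAbs : ℝ))) : ℂ)) / (2 * (a : ℂ))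

/-- The form `[a,b,c] ∘ M`. -/
def qfComp (a b c : ℤ) (M : SL2Z) : ℤ × ℤ × ℤ :=
  (a * (M.1 0 0) ^ 2 + b * (M.1 0 0) * (M.1 1 0) + c * (M.1 1 0) ^ 2,
   2 * a * (M.1 0 0) * (M.1 0 1) + b * ((M.1 0 0) * (M.1 1 1) + (M.1 0 1) * (M.1 1 0)) +
     2 * c * (M.1 1 0) * (M.1 1 1),
   a * (M.1 0 1) ^ 2 + b * (M.1 0 1) * (M.1 1 1) + c * (M.1 1 1) ^ 2)

/-- `w_P`: order of the stabilizer of `P = [a,b,c]` in `PSL₂(ℤ)` (half the order of the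
stabilizer in `SL₂(ℤ)`, which contains `±1`). -/
def wP (a b c : ℤ) : ℕ := Nat.card {M : SL2Z // qfComp a b c M = (a, b, c)} / 2

/-- The meromorphic modular form `f_{k,P}` for `P = [a,b,c]`. -/
def fkP (k : ℕ) (a b c : ℤ) (z : ℂ) : ℂ :=
  (((((b ^ 2 - 4 * a * c).natAbs : ℝ)) ^ ((k : ℝ) - 1 / 2) : ℝ) : ℂ) /
      (2 * (π : ℂ) * (wP a b c : ℂ)) *
    ∑' M : SL2Z, (qfC a b c ((M.1 0 0 : ℂ) * z + (M.1 0 1 : ℂ))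
      ((M.1 1 0 : ℂ) * z + (M.1 1 1 : ℂ))) ^ (-(k : ℤ))

/-- The `n`-th period `r_n(f) = ∫₀^∞ f(iy) y^n dy`. -/
def periodN (n : ℕ) (f : ℂ → ℂ) : ℂ :=
  ∫ y in Set.Ioi (0 : ℝ), f ((y : ℂ) * Complex.I) * (y : ℂ) ^ n

/-- Epstein zeta function of `[a,b,c]` at an integer `k`. -/
def epstein (a b c : ℤ) (k : ℕ) : ℝ :=
  ∑' p : {p : ℤ × ℤ // p ≠ (0, 0)},
    ((a * p.1.1 ^ 2 + b * p.1.1 * p.1.2 + c * p.1.2 ^ 2 : ℤ) : ℝ) ^ (-(k : ℤ))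

/-- `sgn(M)` for `M = (a,b;c,d)`: `sgn(ac)` if `ac ≠ 0`, else `sgn(bd)`. -/
def sgnM (M : SL2Z) : ℤ :=
  if M.1 0 0 * M.1 1 0 ≠ 0 then Int.sign (M.1 0 0 * M.1 1 0) else Int.sign (M.1 0 1 * M.1 1 1)

/-- Upper incomplete Gamma function `Γ(s,x)` for a natural number `s`. -/
def GammaUpper (s : ℕ) (x : ℝ) : ℝ := ∫ t in Set.Ioi x, Real.exp (-t) * t ^ (s - 1)

/-- A cusp form of weight `2k` for `SL₂(ℤ)`, as a function on `ℂ` (holomorphic on `ℍ`,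
modular of weight `2k`, vanishing at the cusp `i∞`). -/
def IsCuspForm2k (k : ℕ) (f : ℂ → ℂ) : Prop :=
  (∀ τ : ℂ, 0 < τ.im → DifferentiableAt ℂ f τ) ∧
  (∀ (M : SL2Z) (τ : ℂ), 0 < τ.im → f (moeb M τ) = jfac M τ ^ (2 * k) * f τ) ∧
  Filter.Tendsto f (Filter.comap Complex.im Filter.atTop) (nhds 0)

/-- `sgn(M T⁻¹) = sgn(M)` for `M ∉ {±I, ±S, ±T, ±ST}`. -/
theorem sgnM_mul_T_inv (M : SL2Z)
    (hM : M ≠ 1 ∧ M ≠ -1 ∧ M ≠ ModularGroup.S ∧ M ≠ -ModularGroup.S ∧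
      M ≠ ModularGroup.T ∧ M ≠ -ModularGroup.T ∧
      M ≠ ModularGroup.S * ModularGroup.T ∧ M ≠ -(ModularGroup.S * ModularGroup.T)) :
    sgnM (M * ModularGroup.T⁻¹) = sgnM M := by
  obtain ⟨h1, h2, h3, h4, h5, h6, h7, h8⟩ := hM
  have hdet := Matrix.det_fin_two M.1
  rw [M.2] at hdet
  have key : ∀ N : SL2Z, M.1 0 0 = N.1 0 0 → M.1 0 1 = N.1 0 1 → M.1 1 0 = N.1 1 0 →
      M.1 1 1 = N.1 1 1 → M = N := by
    intro N p q r s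
    apply Subtype.ext
    ext i j
    fin_cases i <;> fin_cases j <;> assumption
  have e00 : (M * ModularGroup.T⁻¹).1 0 0 = M.1 0 0 := by
    simp [Matrix.mul_apply, Fin.sum_univ_two]
  have e01 : (M * ModularGroup.T⁻¹).1 0 1 = M.1 0 1 - M.1 0 0 := by
    simp [Matrix.mul_apply, Fin.sum_univ_two]; ring
  have e10 : (M * ModularGroup.T⁻¹).1 1 0 = M.1 1 0 := by
    simp [Matrix.mul_apply, Fin.sum_univ_two]
  have e11 : (M * ModularGroup.T⁻¹).1 1 1 = M.1 1 1 - M.1 1 0 := by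
    simp [Matrix.mul_apply, Fin.sum_univ_two]; ring
  have k1 : M.1 0 0 = 1 → M.1 0 1 = 0 → M.1 1 0 = 0 → M.1 1 1 = 1 → False :=
    fun p q r s => h1 (key _ (p.trans (by decide)) (q.trans (by decide))
      (r.trans (by decide)) (s.trans (by decide)))
  have k2 : M.1 0 0 = -1 → M.1 0 1 = 0 → M.1 1 0 = 0 → M.1 1 1 = -1 → False :=
    fun p q r s => h2 (key _ (p.trans (by decide)) (q.trans (by decide))
      (r.trans (by decide)) (s.trans (by decide)))
  have k3 : M.1 0 0 = 0 → M.1 0 1 = -1 → M.1 1 0 = 1 → M.1 1 1 = 0 → False :=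
    fun p q r s => h3 (key _ (p.trans (by decide)) (q.trans (by decide))
      (r.trans (by decide)) (s.trans (by decide)))
  have k4 : M.1 0 0 = 0 → M.1 0 1 = 1 → M.1 1 0 = -1 → M.1 1 1 = 0 → False :=
    fun p q r s => h4 (key _ (p.trans (by decide)) (q.trans (by decide))
      (r.trans (by decide)) (s.trans (by decide)))
  have k5 : M.1 0 0 = 1 → M.1 0 1 = 1 → M.1 1 0 = 0 → M.1 1 1 = 1 → False :=
    fun p q r s => h5 (key _ (p.trans (by decide)) (q.trans (by decide))
      (r.trans (by decide)) (s.trans (by decide)))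
  have k6 : M.1 0 0 = -1 → M.1 0 1 = -1 → M.1 1 0 = 0 → M.1 1 1 = -1 → False :=
    fun p q r s => h6 (key _ (p.trans (by decide)) (q.trans (by decide))
      (r.trans (by decide)) (s.trans (by decide)))
  have k7 : M.1 0 0 = 0 → M.1 0 1 = -1 → M.1 1 0 = 1 → M.1 1 1 = 1 → False :=
    fun p q r s => h7 (key _ (p.trans (by decide)) (q.trans (by decide))
      (r.trans (by decide)) (s.trans (by decide)))
  have k8 : M.1 0 0 = 0 → M.1 0 1 = 1 → M.1 1 0 = -1 → M.1 1 1 = -1 → False :=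
    fun p q r s => h8 (key _ (p.trans (by decide)) (q.trans (by decide))
      (r.trans (by decide)) (s.trans (by decide)))
  unfold sgnM
  rw [e00, e01, e10, e11]
  clear key e00 e01 e10 e11 h1 h2 h3 h4 h5 h6 h7 h8
  generalize M.1 0 0 = a at *
  generalize M.1 0 1 = b at *
  generalize M.1 1 0 = c at *
  generalize M.1 1 1 = d at *
  split_ifs with hac
  · rfl
  · push Not at hac
    have sg : ∀ x y : ℤ, (0 < x ∧ 0 < y) ∨ (x < 0 ∧ y < 0) → x.sign = y.sign := by
      rintro x y (⟨hx, hy⟩ | ⟨hx, hy⟩)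
      · rw [Int.sign_eq_one_of_pos hx, Int.sign_eq_one_of_pos hy]
      · rw [Int.sign_eq_neg_one_of_neg hx, Int.sign_eq_neg_one_of_neg hy]
    apply sg
    rcases mul_eq_zero.mp hac with rfl | rfl
    · have hbc : b * (-c) = 1 := by linarith
      rcases Int.mul_eq_one_iff_eq_one_or_neg_one.mp hbc with ⟨rfl, hc⟩ | ⟨rfl, hc⟩
      · obtain rfl : c = -1 := by omega
        simp at *
        omega
      · obtain rfl : c = 1 := by omega
        simp at *
        omega
    · have had : a * d = 1 := by linarith
      rcases Int.mul_eq_one_iff_eq_one_or_neg_one.mp had with ⟨rfl, rfl⟩ | ⟨rfl, rfl⟩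
      · simp at *
        omega
      · simp at *
        omega

end LHMF
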